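/- arXiv:1804.03284 — 2 statements merged into one kernel-verified Lean document; each statement's English description precedes it below -/
import Mathlib

section
/- Let n ≥ 1, y : Fin n → ℝ, and κ > 0, and define the Boltzmann policy p_κ(i) = exp(y(i)/κ) / (Σ_{j} exp(y(j)/κ)). Then the Boltzmann-weighted average of the values satisfies Σ_i p_κ(i)·y(i) ≥ (1/n)·Σ_i y(i); that is, the expected value under the Boltzmann policy is at least the expected value under the uniform policy. -/
/-- The expected value under the Boltzmann policy is at least the expected
value under the uniform policy:
`Σ_i p_κ(i)·y(i) ≥ (1/n)·Σ_i y(i)`. -/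
theorem boltzmann_expected_ge_uniform
    (n : ℕ) (hn : 1 ≤ n) (y : Fin n → ℝ) (κ : ℝ) (hκ : 0 < κ) :
    (1 / (n : ℝ)) * ∑ i, y i ≤
      ∑ i, (Real.exp (y i / κ) / ∑ j, Real.exp (y j / κ)) * y i := by
  have hm : Monovary (fun i => Real.exp (y i / κ)) y := by
    intro i j hij
    exact Real.exp_le_exp.mpr (div_le_div_of_nonneg_right hij.le hκ.le)
  have h := hm.sum_mul_sum_le_card_mul_sum
  rw [Fintype.card_fin] at h
  have hn0 : (0 : ℝ) < n := by exact_mod_cast hn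
  have hS : 0 < ∑ j, Real.exp (y j / κ) :=
    Finset.sum_pos (fun j _ => Real.exp_pos _) ⟨⟨0, hn⟩, Finset.mem_univ _⟩
  have e : ∑ i, (Real.exp (y i / κ) / ∑ j, Real.exp (y j / κ)) * y i
      = (∑ i, Real.exp (y i / κ) * y i) / ∑ j, Real.exp (y j / κ) := by
    rw [Finset.sum_div]
    exact Finset.sum_congr rfl fun i _ => by ring
  rw [e, one_div_mul_eq_div, div_le_div_iff₀ hn0 hS]
  linarith
end

section
/- Let n ≥ 2, let f : Fin n → ℝ, and suppose a* is an action with f(a*) > f(a) for all a ≠ a*. Let ε ∈ [0,1] and define the ε-greedy distribution q by q(a*) = 1 − ε + ε/n and q(a) = ε/n for a ≠ a*. Let κ > 0 and let p be the Boltzmann policy p(i) = exp(f(i)/κ) / (Σ_j exp(f(j)/κ)). If p(a*) > q(a*), then the expected value under the Boltzmann policy strictly exceeds the expected value under the ε-greedy policy: Σ_i p(i)·f(i) > Σ_i q(i)·f(i). -/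
/-- If the Boltzmann policy assigns strictly higher probability to the
(unique) optimal action than the ε-greedy policy does, then the expected value under the
Boltzmann policy strictly exceeds the expected value under the ε-greedy policy. -/
theorem boltzmann_beats_epsilon_greedy
    (n : ℕ) (hn : 2 ≤ n) (f : Fin n → ℝ) (astar : Fin n)
    (hstar : ∀ a : Fin n, a ≠ astar → f a < f astar)
    (ε : ℝ) (hε0 : 0 ≤ ε) (hε1 : ε ≤ 1)
    (q : Fin n → ℝ)
    (hq : q = fun a : Fin n => if a = astar then 1 - ε + ε / n else ε / n)
    (κ : ℝ) (hκ : 0 < κ)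
    (p : Fin n → ℝ)
    (hp : p = fun i : Fin n => Real.exp (f i / κ) / ∑ j, Real.exp (f j / κ))
    (h : q astar < p astar) :
    ∑ i, q i * f i < ∑ i, p i * f i := by
  have hn' : (2:ℝ) ≤ n := by exact_mod_cast hn
  have hZ : 0 < ∑ j, Real.exp (f j / κ) :=
    Finset.sum_pos (fun i _ => Real.exp_pos _) ⟨astar, Finset.mem_univ _⟩
  have hp1 : ∑ i, p i = 1 := by
    rw [hp, ← Finset.sum_div, div_self hZ.ne']
  have hq0 : q astar = 1 - ε + ε / n := by simp [hq]
  have hqs : ∀ i ∈ Finset.univ.erase astar, q i = ε / n := by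
    intro i hi
    simp [hq, Finset.ne_of_mem_erase hi]
  have hcard : ((Finset.univ.erase astar).card : ℝ) = n - 1 := by
    rw [Finset.card_erase_of_mem (Finset.mem_univ _), Finset.card_univ, Fintype.card_fin,
      Nat.cast_sub (by omega)]
    simp
  have hanti : AntivaryOn p (fun i => f astar - f i) (Finset.univ.erase astar : Finset (Fin n)) := by
    intro i _ j _ hij
    have : f j ≤ f i := by
      change f astar - f i < f astar - f j at hij
      linarith
    rw [hp]
    show Real.exp (f j / κ) / _ ≤ Real.exp (f i / κ) / _
    exact div_le_div_of_nonneg_right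
      (Real.exp_le_exp.2 (div_le_div_of_nonneg_right this hκ.le)) hZ.le
  have hch := hanti.card_mul_sum_le_sum_mul_sum
  rw [hcard] at hch
  have hG : 0 < ∑ i ∈ Finset.univ.erase astar, (f astar - f i) := by
    apply Finset.sum_pos
    · intro i hi
      exact sub_pos.2 (hstar i (Finset.ne_of_mem_erase hi))
    · rw [← Finset.card_pos, ← Nat.cast_pos (α := ℝ), hcard]
      linarith
  have hps := Finset.add_sum_erase Finset.univ p (Finset.mem_univ astar)
  have hP := Finset.add_sum_erase Finset.univ (fun i => p i * f i) (Finset.mem_univ astar)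
  have hQ := Finset.add_sum_erase Finset.univ (fun i => q i * f i) (Finset.mem_univ astar)
  have hqe : ∑ i ∈ Finset.univ.erase astar, q i * f i
      = ε / n * ∑ i ∈ Finset.univ.erase astar, f i := by
    rw [Finset.mul_sum]
    exact Finset.sum_congr rfl fun i hi => by rw [hqs i hi]
  simp only [mul_sub, Finset.sum_sub_distrib, ← Finset.sum_mul, Finset.sum_const, nsmul_eq_mul,
    hcard] at hch hG
  rw [hp1] at hps
  rw [← hP, ← hQ, hqe, hq0]
  rw [hq0] at h
  have hε : ε = n * (ε / n) := by field_simp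
  generalize ε / (n:ℝ) = d at *
  generalize ∑ i ∈ Finset.univ.erase astar, p i * f i = A at *
  generalize ∑ i ∈ Finset.univ.erase astar, f i = B at *
  have hS : ∑ i ∈ Finset.univ.erase astar, p i = 1 - p astar := by linarith
  rw [hS] at hch
  have hlt : 1 - p astar < (n - 1) * d := by linarith
  have h2 := mul_lt_mul_of_pos_right hlt hG
  have h3 : (0:ℝ) < n - 1 := by linarith
  have h4 : (1 - p astar) * f astar - A < d * ((n - 1) * f astar - B) := by
    apply lt_of_mul_lt_mul_left _ h3.le
    linarith
  have h5 : (1 - ε + d) = 1 - (n - 1) * d := by linarith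
  rw [h5]
  linarith
end
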